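/- The GHZ target function f(z) = ⊕_{i=1}^{n-1} z_i z_{i+1} ⊕ ⊕_{i=1}^{n} z_i on F_2^n has all Walsh coefficients of magnitude either 0 or 2^(⌈n/2⌉); in particular its nonlinearity is 2^(n-1) - 2^(⌈n/2⌉-1), and for n even the function is bent. -/

import Mathlib

/-- Inner product over F_2. -/
def bip {n : ℕ} (x y : Fin n → ZMod 2) : ZMod 2 := ∑ i, x i * y i

/-- Walsh-Hadamard transform of a Boolean function f : F_2^n → F_2. -/
def walsh {n : ℕ} (f : (Fin n → ZMod 2) → ZMod 2) (y : Fin n → ZMod 2) : ℤ :=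
  ∑ x, (-1 : ℤ) ^ (bip x y + f x).val

/-- Hamming distance between the truth tables of two Boolean functions. -/
def hdist {n : ℕ} (f g : (Fin n → ZMod 2) → ZMod 2) : ℕ :=
  (Finset.univ.filter fun x => f x ≠ g x).card

/-- Nonlinearity: minimum Hamming distance from f to the set of affine
functions L_{a,b}(x) = a ⊕ ⟨b,x⟩. -/
def nonlinearity {n : ℕ} (f : (Fin n → ZMod 2) → ZMod 2) : ℕ :=
  Finset.univ.inf' ⟨((0 : ZMod 2), (0 : Fin n → ZMod 2)), Finset.mem_univ _⟩
    (fun p : ZMod 2 × (Fin n → ZMod 2) => hdist f (fun x => p.1 + bip p.2 x))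

/-!
Eliminating two variables at one end of the path shows that its quadratic form is, up to a linear
change of variables, an orthogonal sum of hyperbolic planes and, for odd `n`, a one-dimensional zero
form. Each plane doubles the absolute values of the Walsh spectrum, so the form is plateaued with
amplitude `2 ^ ⌈n / 2⌉`; the affine part only translates the spectrum and changes its sign. Parseval
then gives the rest: some coefficient is nonzero, which determines the nonlinearity, and if the
squared amplitude is `2 ^ n` then no coefficient can vanish.
-/

open Finset

/-- The nontrivial character `a ↦ (-1) ^ a` of `𝔽₂`, with integer values. -/
def signChar : AddChar (ZMod 2) ℤ := AddChar.zmodChar 2 (neg_one_sq (R := ℤ))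

theorem signChar_eq_one_or_neg_one : ∀ a, signChar a = 1 ∨ signChar a = -1 := by decide

theorem abs_signChar (a : ZMod 2) : |signChar a| = 1 :=
  (abs_eq zero_le_one).mpr (signChar_eq_one_or_neg_one a)

theorem signChar_eq_one_iff : ∀ {a}, signChar a = 1 ↔ a = 0 := by decide

theorem exists_signChar_mul_eq_abs (m : ℤ) : ∃ a, signChar a * m = |m| := by
  rcases abs_choice m with h | h
  · exact ⟨0, by rw [h, AddChar.map_zero_eq_one, one_mul]⟩
  · exact ⟨1, by rw [h, show signChar 1 = -1 from rfl, neg_one_mul]⟩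

theorem two_mul_ite_ne_eq_one_sub_signChar :
    ∀ a b : ZMod 2, (2 * if a ≠ b then 1 else 0 : ℤ) = 1 - signChar (a + b) := by
  decide

section Walsh

variable {n : ℕ}

theorem bip_eq_dotProduct (x y : Fin n → ZMod 2) : bip x y = x ⬝ᵥ y := rfl

theorem walsh_eq_sum_signChar (f : (Fin n → ZMod 2) → ZMod 2) (y : Fin n → ZMod 2) :
    walsh f y = ∑ x, signChar (bip x y + f x) := rfl

theorem sum_signChar_bip (x : Fin n → ZMod 2) :
    ∑ y, signChar (bip x y) = if x = 0 then 2 ^ n else 0 := by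
  classical
  let ψ : AddChar (Fin n → ZMod 2) ℤ :=
    signChar.compAddMonoidHom (.mk' (x ⬝ᵥ ·) (dotProduct_add x))
  have ψ_eq_zero_iff : ψ = 0 ↔ x = 0 := by
    constructor
    · intro h
      ext1 i
      have := DFunLike.congr_fun h (Pi.single i 1)
      simpa [ψ, signChar_eq_one_iff] using this
    · rintro rfl
      ext y
      simp [ψ]
  calc ∑ y, signChar (bip x y) = ∑ y, ψ y := rfl
    _ = if x = 0 then 2 ^ n else 0 := by simp [AddChar.sum_eq_ite, ψ_eq_zero_iff, ZMod.card]

theorem sum_walsh_sq (f : (Fin n → ZMod 2) → ZMod 2) : ∑ y, walsh f y ^ 2 = 2 ^ n * 2 ^ n := by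
  have walsh_sq (y) : walsh f y ^ 2 =
      ∑ x, ∑ x', signChar (f x + f x') * signChar (bip (x + x') y) := by
    rw [sq, walsh_eq_sum_signChar, sum_mul_sum]
    refine sum_congr rfl fun x _ => sum_congr rfl fun x' _ => ?_
    simp only [bip_eq_dotProduct, add_dotProduct, AddChar.map_add_eq_mul]
    ring
  calc ∑ y, walsh f y ^ 2
      = ∑ x, ∑ x', signChar (f x + f x') * ∑ y, signChar (bip (x + x') y) := by
        simp only [walsh_sq, mul_sum]
        rw [sum_comm]
        exact sum_congr rfl fun x _ => sum_comm
    _ = ∑ x : Fin n → ZMod 2, 2 ^ n := by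
        refine sum_congr rfl fun x _ => ?_
        simp [sum_signChar_bip, ← ZModModule.sub_eq_add, sub_eq_zero]
    _ = 2 ^ n * 2 ^ n := by simp [ZMod.card]

theorem walsh_add_affine (f : (Fin n → ZMod 2) → ZMod 2) (b : Fin n → ZMod 2) (c : ZMod 2)
    (y : Fin n → ZMod 2) :
    walsh (fun x => f x + bip b x + c) y = signChar c * walsh f (y + b) := by
  simp only [walsh_eq_sum_signChar, mul_sum, ← AddChar.map_add_eq_mul]
  refine sum_congr rfl fun x _ => congrArg signChar ?_
  simp only [bip_eq_dotProduct, dotProduct_add, dotProduct_comm b x]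
  ring

theorem two_mul_hdist_affine (f : (Fin n → ZMod 2) → ZMod 2) (c : ZMod 2) (b : Fin n → ZMod 2) :
    (2 * hdist f (fun x => c + bip b x) : ℤ) = 2 ^ n - signChar c * walsh f b := by
  have card_eq : (2 : ℤ) ^ n = ∑ _x : Fin n → ZMod 2, 1 := by simp [ZMod.card]
  rw [hdist, card_filter, walsh_eq_sum_signChar, card_eq, mul_sum, ← sum_sub_distrib]
  push_cast
  rw [mul_sum]
  refine sum_congr rfl fun x _ => ?_
  rw [two_mul_ite_ne_eq_one_sub_signChar, ← AddChar.map_add_eq_mul, bip_eq_dotProduct,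
    bip_eq_dotProduct, dotProduct_comm b x]
  ring_nf

theorem two_mul_nonlinearity {f : (Fin n → ZMod 2) → ZMod 2} {M : ℤ}
    (hM : IsGreatest (Set.range fun y => |walsh f y|) M) :
    (2 * nonlinearity f : ℤ) = 2 ^ n - M := by
  obtain ⟨⟨b, hb⟩, le_M⟩ := hM
  apply le_antisymm
  · obtain ⟨c, hc⟩ := exists_signChar_mul_eq_abs (walsh f b)
    have nonlinearity_le : nonlinearity f ≤ hdist f (fun x => c + bip b x) :=
      inf'_le _ (mem_univ (c, b))
    have hdist_eq := two_mul_hdist_affine f c b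
    rw [hc, show |walsh f b| = M from hb] at hdist_eq
    lia
  · obtain ⟨⟨c, a⟩, -, nonlinearity_eq⟩ := exists_mem_eq_inf' (s := univ)
      ⟨((0 : ZMod 2), (0 : Fin n → ZMod 2)), mem_univ _⟩
      (fun p : ZMod 2 × (Fin n → ZMod 2) => hdist f (fun x => p.1 + bip p.2 x))
    have walsh_le : signChar c * walsh f a ≤ M :=
      calc signChar c * walsh f a ≤ |signChar c * walsh f a| := le_abs_self _
        _ = |walsh f a| := by rw [abs_mul, abs_signChar, one_mul]
        _ ≤ M := le_M ⟨a, rfl⟩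
    rw [nonlinearity, nonlinearity_eq, two_mul_hdist_affine]
    lia

end Walsh

/-- `f` is plateaued with amplitude `M`: its Walsh coefficients are all `0` or `±M`. -/
def IsPlateaued {n : ℕ} (f : (Fin n → ZMod 2) → ZMod 2) (M : ℤ) : Prop :=
  ∀ y, walsh f y = 0 ∨ |walsh f y| = M

namespace IsPlateaued

variable {n : ℕ} {f : (Fin n → ZMod 2) → ZMod 2} {M : ℤ}

theorem add_affine (hf : IsPlateaued f M) (b : Fin n → ZMod 2) (c : ZMod 2) :
    IsPlateaued (fun x => f x + bip b x + c) M := fun y => by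
  rw [walsh_add_affine, abs_mul, abs_signChar, one_mul]
  exact (hf (y + b)).imp_left (mul_eq_zero_of_right _)

theorem exists_abs_walsh_eq (hf : IsPlateaued f M) : ∃ y, |walsh f y| = M := by
  by_contra! h
  have walsh_eq_zero (y) : walsh f y = 0 := (hf y).resolve_right (h y)
  have := sum_walsh_sq f
  simp [walsh_eq_zero] at this

theorem isGreatest_abs_walsh (hf : IsPlateaued f M) :
    IsGreatest (Set.range fun y => |walsh f y|) M := by
  obtain ⟨y₀, hy₀⟩ := hf.exists_abs_walsh_eq
  refine ⟨⟨y₀, hy₀⟩, ?_⟩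
  rintro _ ⟨y, rfl⟩
  rcases hf y with h | h
  · simpa only [h, abs_zero, ← hy₀] using abs_nonneg _
  · exact h.le

theorem abs_walsh_eq_of_sq_eq (hf : IsPlateaued f M) (hM : M ^ 2 = 2 ^ n) (y : Fin n → ZMod 2) :
    |walsh f y| = M := by
  obtain ⟨⟨y₀, hy₀⟩, le_M⟩ := hf.isGreatest_abs_walsh
  have M_nonneg : 0 ≤ M := hy₀ ▸ abs_nonneg _
  have sq_le (z) (_ : z ∈ univ) : walsh f z ^ 2 ≤ M ^ 2 :=
    sq_le_sq.mpr ((le_M ⟨z, rfl⟩).trans (le_abs_self M))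
  have sum_eq : ∑ z, walsh f z ^ 2 = ∑ _z : Fin n → ZMod 2, M ^ 2 := by
    simp [sum_walsh_sq, hM, ZMod.card]
  rw [← abs_of_nonneg M_nonneg, ← sq_eq_sq_iff_abs_eq_abs]
  exact (sum_eq_sum_iff_of_le sq_le).mp sum_eq y (mem_univ y)

end IsPlateaued

section HyperbolicExtension

variable {n : ℕ}

/-- The extension of `g` by two variables `u, v` in front, `u v + v ⟨b, w⟩ + g(w)`: an orthogonal
sum of `g` with a hyperbolic plane, up to the linear change of variables `u ↦ u + ⟨b, w⟩`. -/
def hyperbolicExtension (b : Fin n → ZMod 2) (g : (Fin n → ZMod 2) → ZMod 2)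
    (z : Fin (n + 2) → ZMod 2) : ZMod 2 :=
  z 0 * z 1 + z 1 * bip b (Fin.tail (Fin.tail z)) + g (Fin.tail (Fin.tail z))

theorem sum_eq_sum_cons_cons {R : Type*} [Fintype R] {A : Type*} [AddCommMonoid A]
    (F : (Fin (n + 2) → R) → A) :
    ∑ z, F z = ∑ w : Fin n → R, ∑ v, ∑ u, F (Fin.cons u (Fin.cons v w : Fin (n + 1) → R)) := by
  have sum_cons {m : ℕ} (G : (Fin (m + 1) → R) → A) :
      ∑ z, G z = ∑ w : Fin m → R, ∑ u, G (Fin.cons u w) := by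
    rw [← (Fin.consEquiv fun _ => R).sum_comp, Fintype.sum_prod_type_right]
    rfl
  rw [sum_cons, sum_cons]

-- Summing over `u` forces `v = r`.
theorem sum_sum_signChar_hyperbolic :
    ∀ r s h : ZMod 2, ∑ v, ∑ u, signChar (u * r + v * s + (u * v + v * h)) =
      2 * signChar (r * s + r * h) := by
  decide

theorem walsh_hyperbolicExtension (b : Fin n → ZMod 2) (g : (Fin n → ZMod 2) → ZMod 2)
    (y : Fin (n + 2) → ZMod 2) :
    walsh (hyperbolicExtension b g) y =
      2 * signChar (y 0 * y 1) * walsh g (Fin.tail (Fin.tail y) + y 0 • b) := by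
  simp only [walsh_eq_sum_signChar, sum_eq_sum_cons_cons, mul_sum]
  refine sum_congr rfl fun w _ => ?_
  set t := bip w (Fin.tail (Fin.tail y)) + g w with ht
  calc ∑ v, ∑ u, signChar (bip (Fin.cons u (Fin.cons v w : Fin (n + 1) → ZMod 2)) y
          + hyperbolicExtension b g (Fin.cons u (Fin.cons v w : Fin (n + 1) → ZMod 2)))
      = ∑ v, ∑ u, signChar (u * y 0 + v * y 1 + (u * v + v * bip b w)) * signChar t := by
        refine sum_congr rfl fun v _ => sum_congr rfl fun u _ => ?_
        rw [← AddChar.map_add_eq_mul, ht]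
        congr 1
        simp only [bip, hyperbolicExtension, Fin.sum_univ_succ, Fin.cons_zero, Fin.cons_succ,
          Fin.succ_zero_eq_one, Fin.cons_one, Fin.tail, Fin.tail_cons]
        ring
    _ = 2 * signChar (y 0 * y 1 + y 0 * bip b w) * signChar t := by
        simp only [← sum_mul, sum_sum_signChar_hyperbolic]
    _ = 2 * signChar (y 0 * y 1) *
          signChar (bip w (Fin.tail (Fin.tail y) + y 0 • b) + g w) := by
        simp only [ht, bip_eq_dotProduct, dotProduct_add, dotProduct_smul, smul_eq_mul,
          dotProduct_comm b w, AddChar.map_add_eq_mul]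
        ring

theorem IsPlateaued.hyperbolicExtension {g : (Fin n → ZMod 2) → ZMod 2} {M : ℤ}
    (hg : IsPlateaued g M) (b : Fin n → ZMod 2) :
    IsPlateaued (hyperbolicExtension b g) (2 * M) := fun y => by
  rw [walsh_hyperbolicExtension, abs_mul, abs_mul, abs_signChar, mul_one, abs_two]
  exact (hg _).imp (mul_eq_zero_of_right _) (congrArg (2 * ·))

end HyperbolicExtension

/-- The quadratic form `∑ zᵢ zᵢ₊₁` of the path on `n` vertices. -/
def pathForm {n : ℕ} (z : Fin n → ZMod 2) : ZMod 2 :=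
  ∑ i : Fin (n - 1), z ⟨i, by lia⟩ * z ⟨i + 1, by lia⟩

theorem pathForm_succ {n : ℕ} (z : Fin (n + 1) → ZMod 2) :
    pathForm z = ∑ i : Fin n, z i.castSucc * z i.succ := rfl

theorem exists_pathForm_eq_hyperbolicExtension (n : ℕ) :
    ∃ b : Fin n → ZMod 2, pathForm = hyperbolicExtension b pathForm := by
  cases n with
  | zero => exact ⟨0, funext fun z => by simp [hyperbolicExtension, pathForm, bip]⟩
  | succ n =>
    refine ⟨Pi.single 0 1, funext fun z => ?_⟩
    simp [pathForm_succ, hyperbolicExtension, bip_eq_dotProduct, Fin.sum_univ_succ, Fin.tail,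
      add_assoc]

theorem isPlateaued_pathForm : ∀ n : ℕ, IsPlateaued (pathForm (n := n)) (2 ^ ((n + 1) / 2))
  | 0 => by unfold IsPlateaued; decide
  | 1 => by unfold IsPlateaued; decide
  | n + 2 => by
    obtain ⟨b, hb⟩ := exists_pathForm_eq_hyperbolicExtension n
    rw [hb, show (n + 2 + 1) / 2 = (n + 1) / 2 + 1 by lia, pow_succ']
    exact (isPlateaued_pathForm n).hyperbolicExtension b

theorem sum_attach_range_eq_sum_fin {A : Type*} [AddCommMonoid A] {m : ℕ} (F : range m → A) :
    ∑ i ∈ (range m).attach, F i = ∑ i : Fin m, F ⟨i, mem_range.mpr i.isLt⟩ := by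
  rw [attach_eq_univ]
  exact (Fintype.sum_equiv (Fin.equivSubtype.trans (Equiv.subtypeEquivRight (by simp))) _ _
    fun _ => rfl).symm

theorem ghz_walsh_spectrum_general {n : ℕ} (b : Fin n → ZMod 2) (c : ZMod 2)
    (f : (Fin n → ZMod 2) → ZMod 2) (hf : ∀ z, f z = pathForm z + bip b z + c) :
    (∀ y, walsh f y = 0 ∨ |walsh f y| = 2 ^ ((n + 1) / 2)) ∧
    nonlinearity f = 2 ^ (n - 1) - 2 ^ ((n + 1) / 2 - 1) ∧
    (Even n → ∀ y, |walsh f y| = 2 ^ (n / 2)) := by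
  obtain rfl : f = fun z => pathForm z + bip b z + c := funext hf
  have plateaued := (isPlateaued_pathForm n).add_affine b c
  refine ⟨plateaued, ?_, fun n_even => ?_⟩
  · have two_mul_nl := two_mul_nonlinearity plateaued.isGreatest_abs_walsh
    cases n with
    | zero => simpa using two_mul_nl
    | succ k =>
      rw [show (k + 1 + 1) / 2 = k / 2 + 1 by lia, pow_succ', pow_succ'] at two_mul_nl
      rw [show (k + 1 + 1) / 2 = k / 2 + 1 by lia, Nat.add_sub_cancel, Nat.add_sub_cancel]
      zify [Nat.pow_le_pow_right two_pos (Nat.div_le_self k 2)]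
      linarith
  · obtain ⟨k, rfl⟩ := n_even
    rw [show (k + k + 1) / 2 = (k + k) / 2 by lia] at plateaued
    refine plateaued.abs_walsh_eq_of_sq_eq ?_
    rw [← pow_mul, show (k + k) / 2 * 2 = k + k by lia]

/-- the GHZ target function
f(z) = ⊕_{i=1}^{n-1} z_i z_{i+1} ⊕ ⊕_{i=1}^n z_i has Walsh coefficients of
magnitude 0 or 2^⌈n/2⌉; its nonlinearity is 2^(n-1) - 2^(⌈n/2⌉-1), and for
n even it is bent (|W_f(y)| = 2^(n/2) for all y). -/
theorem ghz_walsh_spectrum (n : ℕ) (f : (Fin n → ZMod 2) → ZMod 2)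
    (hf : ∀ z : Fin n → ZMod 2,
      f z = (∑ i ∈ (Finset.range (n - 1)).attach,
          z ⟨i.1, by have := Finset.mem_range.mp i.2; omega⟩ *
          z ⟨i.1 + 1, by have := Finset.mem_range.mp i.2; omega⟩) +
        ∑ i, z i) :
    (∀ y, walsh f y = 0 ∨ |walsh f y| = 2 ^ ((n + 1) / 2)) ∧
    nonlinearity f = 2 ^ (n - 1) - 2 ^ ((n + 1) / 2 - 1) ∧
    (Even n → ∀ y, |walsh f y| = 2 ^ (n / 2)) := by
  refine ghz_walsh_spectrum_general (fun _ => 1) 0 f fun z => ?_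
  simp [hf, sum_attach_range_eq_sum_fin, pathForm, bip]
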